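/- Let N ≥ 1, 0 < γ < min{2, N}, and let g : [0,∞) → [0,∞) be a non-decreasing Lipschitz function with g(0) = 0. Let u₀, v₀ : ℝ^N → ℝ be non-negative essentially bounded measurable functions with u₀ ≥ v₀ almost everywhere. If u and v are non-negative functions on ℝ^N × [0,∞), essentially bounded on ℝ^N × (0,T) for every T > 0, satisfying u(x,t) = ∫_{ℝ^N} G_t(x−y) u₀(y) dy + ∫₀ᵗ ∫_{ℝ^N} G_{t−σ}(x−y) |y|^{−γ} g(u(y,σ)) dy dσ and v(x,t) = ∫_{ℝ^N} G_t(x−y) v₀(y) dy + ∫₀ᵗ ∫_{ℝ^N} G_{t−σ}(x−y) |y|^{−γ} g(v(y,σ)) dy dσ almost everywhere, then u ≥ v almost everywhere on ℝ^N × (0,∞). -/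

import Mathlib

open MeasureTheory Filter Real

/-- The heat kernel `G_t(x) = (4πt)^{-N/2} exp(-|x|²/(4t))` on `ℝ^N`. -/
noncomputable def heatKernel (N : ℕ) (t : ℝ) (x : EuclideanSpace ℝ (Fin N)) : ℝ :=
  (4 * π * t) ^ (-(N : ℝ) / 2) * Real.exp (-‖x‖ ^ 2 / (4 * t))

/-- `u` is a non-negative mild solution of `u_t - Δu = |x|^{-γ} g(u)`,
`u(·,0) = u₀`, which is (measurable and) essentially bounded on
`ℝ^N × (0,T)` for every `T > 0`, the integral equation holding for almost
every `(x,t)` with `t ∈ (0,T]`. -/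
def IsLipSolution (N : ℕ) (γ : ℝ) (g : ℝ → ℝ)
    (u₀ : EuclideanSpace ℝ (Fin N) → ℝ)
    (u : EuclideanSpace ℝ (Fin N) → ℝ → ℝ) : Prop :=
  -- u is non-negative
  (∀ x t, 0 ≤ t → 0 ≤ u x t) ∧
  AEMeasurable (fun p : EuclideanSpace ℝ (Fin N) × ℝ => u p.1 p.2) ∧
  -- u is essentially bounded on ℝ^N × (0,T) for every T > 0
  (∀ T : ℝ, 0 < T → ∃ C : ℝ,
    ∀ᵐ p : EuclideanSpace ℝ (Fin N) × ℝ ∂volume,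
      p.2 ∈ Set.Ioo 0 T → |u p.1 p.2| ≤ C) ∧
  -- the integral equation, for a.e. (x,t) with 0 < t ≤ T
  (∀ T : ℝ, 0 < T →
    ∀ᵐ p : EuclideanSpace ℝ (Fin N) × ℝ ∂volume, p.2 ∈ Set.Ioc 0 T →
      u p.1 p.2 = (∫ y, heatKernel N p.2 (p.1 - y) * u₀ y) +
        ∫ σ in (0 : ℝ)..p.2, ∫ y,
          heatKernel N (p.2 - σ) (p.1 - y) * ‖y‖ ^ (-γ) * g (u y σ))

/-!
The positive part of `w = v - u` satisfies `w⁺ ≤ L ∫∫ G_{t-σ}(x-y) |y|^{-γ} w⁺ dy dσ`, because `g`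
is non-decreasing and `L`-Lipschitz on the bounded range of the solutions. The singular potential
costs only a power of time: `∫ G_t(x-y) |y|^{-γ} dy ≤ C t^{-γ/2}`, which is integrable at `t = 0`
since `γ < 2`. Hence for large `b` the Duhamel operator has norm less than `1 / L` with respect to
the weight `e^{bt}`, and iterating the inequality from `w⁺ ≤ M e^{bt}` forces `w⁺ = 0`.
-/

open Set Metric Module Topology
open scoped ENNReal NNReal

section SingularWeight

variable {E : Type*} [NormedAddCommGroup E] [MeasurableSpace E] [BorelSpace E] {μ : Measure E}
  {γ r : ℝ}

theorem lintegral_mul_norm_rpow_neg_le {f : E → ℝ≥0∞} {A : ℝ≥0∞} (hf : ∀ y, f y ≤ A)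
    (hγ : 0 ≤ γ) (hr : 0 < r) :
    ∫⁻ y, f y * .ofReal (‖y‖ ^ (-γ)) ∂μ ≤
      A * ∫⁻ y in ball 0 r, .ofReal (‖y‖ ^ (-γ)) ∂μ + .ofReal (r ^ (-γ)) * ∫⁻ y, f y ∂μ := by
  rw [← lintegral_add_compl _ (measurableSet_ball (x := (0 : E)) (ε := r)),
    ← lintegral_const_mul A (by fun_prop), ← lintegral_const_mul' _ f ENNReal.ofReal_ne_top]
  gcongr ?_ + ?_
  · gcongr with y
    exact hf y
  · refine (setLIntegral_mono' measurableSet_ball.compl fun y hy => ?_).trans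
      (setLIntegral_le_lintegral _ _)
    rw [mul_comm]
    gcongr ENNReal.ofReal ?_ * _
    exact rpow_le_rpow_of_nonpos hr (by simpa using hy) (neg_nonpos.2 hγ)

variable [NormedSpace ℝ E] [FiniteDimensional ℝ E] [μ.IsAddHaarMeasure]

theorem integrableOn_ball_norm_rpow_neg (hE : 1 ≤ finrank ℝ E) (hγ : γ < finrank ℝ E) :
    IntegrableOn (fun y : E => ‖y‖ ^ (-γ)) (ball 0 r) μ := by
  refine integrableOn_ball_of_norm_le_rpow (C := 1) hE hγ (ae_of_all _ fun y => ?_)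
    (Measurable.aestronglyMeasurable (by fun_prop))
  rw [one_mul, Real.norm_of_nonneg (by positivity)]

theorem setIntegral_ball_norm_rpow_neg (hr : 0 < r) :
    ∫ y in ball (0 : E) r, ‖y‖ ^ (-γ) ∂μ =
      r ^ (finrank ℝ E - γ) * ∫ y in ball (0 : E) 1, ‖y‖ ^ (-γ) ∂μ := by
  have hscale := Measure.setIntegral_comp_smul_of_pos μ (fun y => ‖y‖ ^ (-γ)) (ball 0 1) hr
  simp only [norm_smul, Real.norm_of_nonneg hr.le, mul_rpow hr.le (norm_nonneg _),
    smul_unitBall hr.ne', integral_const_mul, smul_eq_mul] at hscale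
  rw [sub_eq_add_neg, rpow_add hr, rpow_natCast, mul_assoc, hscale,
    mul_inv_cancel_left₀ (by positivity)]

end SingularWeight

section HeatKernel

variable {N : ℕ} {γ t : ℝ}

theorem heatKernel_nonneg (ht : 0 ≤ t) (x : EuclideanSpace ℝ (Fin N)) :
    0 ≤ heatKernel N t x := by
  unfold heatKernel
  positivity

theorem heatKernel_le (ht : 0 < t) (x : EuclideanSpace ℝ (Fin N)) :
    heatKernel N t x ≤ (4 * π * t) ^ (-(N : ℝ) / 2) := by
  refine mul_le_of_le_one_right (by positivity) (exp_le_one_iff.2 ?_)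
  rw [neg_div]
  exact neg_nonpos.2 (by positivity)

@[fun_prop]
theorem measurable_heatKernel {α : Type*} [MeasurableSpace α] {τ : α → ℝ}
    {ξ : α → EuclideanSpace ℝ (Fin N)} (hτ : Measurable τ) (hξ : Measurable ξ) :
    Measurable fun a => heatKernel N (τ a) (ξ a) := by
  unfold heatKernel
  fun_prop

theorem integral_heatKernel (ht : 0 < t) : ∫ x, heatKernel N t x = 1 := by
  have hgauss := GaussianFourier.integral_rexp_neg_mul_sq_norm
    (V := EuclideanSpace ℝ (Fin N)) (b := 1 / (4 * t)) (by positivity)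
  have hexponent (x : EuclideanSpace ℝ (Fin N)) :
      -‖x‖ ^ 2 / (4 * t) = -(1 / (4 * t)) * ‖x‖ ^ 2 := by ring
  simp only [heatKernel, hexponent]
  rw [integral_const_mul, hgauss, finrank_euclideanSpace_fin,
    show π / (1 / (4 * t)) = 4 * π * t by field_simp, ← rpow_add (by positivity)]
  norm_num [neg_div]

theorem integrable_heatKernel (ht : 0 < t) : Integrable (heatKernel N t) :=
  .of_integral_ne_zero (by simp [integral_heatKernel ht])

theorem lintegral_heatKernel_sub (ht : 0 < t) (x : EuclideanSpace ℝ (Fin N)) :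
    ∫⁻ y, .ofReal (heatKernel N t (x - y)) = 1 := by
  rw [lintegral_sub_left_eq_self (fun y => ENNReal.ofReal (heatKernel N t y)) x,
    ← ofReal_integral_eq_lintegral_ofReal (integrable_heatKernel ht)
      (ae_of_all _ (heatKernel_nonneg ht.le)), integral_heatKernel ht, ENNReal.ofReal_one]

theorem integral_heatKernel_mul_mono (ht : 0 < t) (x : EuclideanSpace ℝ (Fin N))
    {a b : EuclideanSpace ℝ (Fin N) → ℝ} (ha : MemLp a ∞) (hb : MemLp b ∞)
    (hab : a ≤ᵐ[volume] b) :
    ∫ y, heatKernel N t (x - y) * a y ≤ ∫ y, heatKernel N t (x - y) * b y := by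
  have hint := (integrable_heatKernel (N := N) ht).comp_sub_left x
  refine integral_mono_ae (hint.mul_of_top_left ha) (hint.mul_of_top_left hb) ?_
  filter_upwards [hab] with y hy
  exact mul_le_mul_of_nonneg_left hy (heatKernel_nonneg ht.le _)

/- Splitting at the parabolic radius `|y| = √t` balances the two contributions: near the origin
`G_t ≤ (4πt)^{-N/2}` against `∫_{|y|<√t} |y|^{-γ} = c t^{(N-γ)/2}`, away from it
`|y|^{-γ} ≤ t^{-γ/2}` against `∫ G_t = 1`. -/
theorem exists_lintegral_heatKernel_mul_norm_rpow_neg_le (hγ0 : 0 ≤ γ) (hγ : γ < N) :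
    ∃ C : ℝ, 0 ≤ C ∧ ∀ t : ℝ, 0 < t → ∀ x : EuclideanSpace ℝ (Fin N),
      ∫⁻ y, .ofReal (heatKernel N t (x - y) * ‖y‖ ^ (-γ)) ≤ .ofReal (C * t ^ (-γ / 2)) := by
  have hN : 1 ≤ N := Nat.cast_pos.1 (hγ0.trans_lt hγ)
  set c := ∫ y in ball (0 : EuclideanSpace ℝ (Fin N)) 1, ‖y‖ ^ (-γ)
  have : 0 ≤ c := integral_nonneg fun y => by positivity
  refine ⟨(4 * π) ^ (-(N : ℝ) / 2) * c + 1, by positivity, fun t ht x => ?_⟩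
  have hball : ∫⁻ y in ball (0 : EuclideanSpace ℝ (Fin N)) √t, .ofReal (‖y‖ ^ (-γ)) =
      .ofReal (√t ^ (N - γ) * c) := by
    rw [← ofReal_integral_eq_lintegral_ofReal
      (integrableOn_ball_norm_rpow_neg (by simpa using hN) (by simpa using hγ))
      (ae_of_all _ fun y => by positivity), setIntegral_ball_norm_rpow_neg (sqrt_pos.2 ht),
      finrank_euclideanSpace_fin]
  have hsqrt (a : ℝ) : √t ^ a = t ^ (a / 2) := by
    rw [sqrt_eq_rpow, ← rpow_mul ht.le, one_div_mul_eq_div]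
  have hpow : (4 * π * t) ^ (-(N : ℝ) / 2) * √t ^ (N - γ) =
      (4 * π) ^ (-(N : ℝ) / 2) * t ^ (-γ / 2) := by
    rw [mul_rpow (by positivity) ht.le, hsqrt, mul_assoc, ← rpow_add ht]
    ring_nf
  calc ∫⁻ y, .ofReal (heatKernel N t (x - y) * ‖y‖ ^ (-γ))
      = ∫⁻ y, .ofReal (heatKernel N t (x - y)) * .ofReal (‖y‖ ^ (-γ)) := by
        simp only [ENNReal.ofReal_mul (heatKernel_nonneg ht.le _)]
    _ ≤ .ofReal ((4 * π * t) ^ (-(N : ℝ) / 2)) *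
            (∫⁻ y in ball (0 : EuclideanSpace ℝ (Fin N)) √t, .ofReal (‖y‖ ^ (-γ))) +
          .ofReal (√t ^ (-γ)) * ∫⁻ y, .ofReal (heatKernel N t (x - y)) :=
        lintegral_mul_norm_rpow_neg_le
          (fun y => ENNReal.ofReal_le_ofReal (heatKernel_le ht (x - y))) hγ0 (sqrt_pos.2 ht)
    _ = .ofReal ((4 * π * t) ^ (-(N : ℝ) / 2)) * .ofReal (√t ^ (N - γ) * c) +
          .ofReal (√t ^ (-γ)) := by
        rw [hball, lintegral_heatKernel_sub ht, mul_one]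
    _ = .ofReal (((4 * π) ^ (-(N : ℝ) / 2) * c + 1) * t ^ (-γ / 2)) := by
        rw [← ENNReal.ofReal_mul (by positivity), ← ENNReal.ofReal_add (by positivity)
          (by positivity), ← mul_assoc, hpow, hsqrt]
        ring_nf

end HeatKernel

theorem lintegral_Ioo_rpow_mul_exp_le {a b : ℝ} (ha : 0 < a) (hb : 0 < b) (t : ℝ) :
    ∫⁻ σ in Ioo 0 t, .ofReal ((t - σ) ^ (a - 1) * exp (b * σ)) ≤
      .ofReal (Gamma a * b ^ (-a) * exp (b * t)) := by
  have hgamma : ∫⁻ s in Ioi 0, .ofReal (s ^ (a - 1) * exp (-(b * s))) =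
      .ofReal (Gamma a * b ^ (-a)) := by
    have hval := integral_rpow_mul_exp_neg_mul_Ioi ha hb
    rw [one_div, inv_rpow hb.le, ← rpow_neg hb.le, mul_comm] at hval
    rw [← hval, ofReal_integral_eq_lintegral_ofReal]
    · refine .of_integral_ne_zero ?_
      rw [hval]
      exact (mul_pos (Gamma_pos_of_pos ha) (rpow_pos_of_pos hb _)).ne'
    · filter_upwards [ae_restrict_mem measurableSet_Ioi] with s (hs : 0 < s)
      positivity
  calc ∫⁻ σ in Ioo 0 t, .ofReal ((t - σ) ^ (a - 1) * exp (b * σ))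
      ≤ ∫⁻ σ in (t - ·) ⁻¹' Ioi 0, .ofReal ((t - σ) ^ (a - 1) * exp (b * σ)) :=
        lintegral_mono_set fun σ hσ => sub_pos.2 hσ.2
    _ = ∫⁻ σ in (t - ·) ⁻¹' Ioi 0,
          .ofReal ((t - σ) ^ (a - 1) * exp (-(b * (t - σ)))) * .ofReal (exp (b * t)) := by
        refine lintegral_congr fun σ => ?_
        rw [← ENNReal.ofReal_mul' (exp_nonneg _), mul_assoc, ← exp_add]
        ring_nf
    _ = .ofReal (Gamma a * b ^ (-a) * exp (b * t)) := by
        rw [lintegral_mul_const' _ _ ENNReal.ofReal_ne_top,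
          (Measure.measurePreserving_sub_left volume t).setLIntegral_comp_preimage
            measurableSet_Ioi
            (f := fun s => ENNReal.ofReal (s ^ (a - 1) * exp (-(b * s)))) (by fun_prop),
          hgamma, ENNReal.ofReal_mul' (exp_nonneg _)]

section Slab

/-- The space-time slab `ℝ^N × (0, T)`, on which solutions are bounded. -/
def slab (N : ℕ) (T : ℝ) : Set (EuclideanSpace ℝ (Fin N) × ℝ) :=
  univ ×ˢ Ioo 0 T

variable {N : ℕ} {p : EuclideanSpace ℝ (Fin N) × ℝ} {S T : ℝ}

theorem mem_slab : p ∈ slab N T ↔ p.2 ∈ Ioo 0 T := by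
  simp [slab]

theorem measurableSet_slab : MeasurableSet (slab N T) :=
  MeasurableSet.univ.prod measurableSet_Ioo

theorem slab_subset_slab (h : S ≤ T) : slab N S ⊆ slab N T :=
  prod_mono_right (Ioo_subset_Ioo_right h)

theorem volume_restrict_slab :
    (volume : Measure (EuclideanSpace ℝ (Fin N) × ℝ)).restrict (slab N T) =
      (volume : Measure (EuclideanSpace ℝ (Fin N))).prod (volume.restrict (Ioo 0 T)) := by
  rw [slab, Measure.volume_eq_prod, ← Measure.prod_restrict, Measure.restrict_univ]

theorem ae_of_forall_ae_restrict_slab {P : EuclideanSpace ℝ (Fin N) × ℝ → Prop}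
    (h : ∀ T, 0 < T → ∀ᵐ p ∂volume.restrict (slab N T), P p) : ∀ᵐ p, 0 < p.2 → P p := by
  have hall := ae_all_iff.2 fun n : ℕ =>
    (ae_restrict_iff' measurableSet_slab).1 (h (n + 1) (by positivity))
  filter_upwards [hall] with p hp hpos
  obtain ⟨n, hn⟩ := exists_nat_gt p.2
  exact hp n (mem_slab.2 ⟨hpos, by linarith⟩)

end Slab

section DuhamelKernel

/-- The kernel `G_{t-σ}(x-y) |y|^{-γ}` of the Duhamel operator, as a function of the space-time
points `p = (x, t)` and `q = (y, σ)`; it is only meant to be used for `q ∈ slab N t`. -/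
noncomputable def duhamelKernel {N : ℕ} (γ : ℝ) (p q : EuclideanSpace ℝ (Fin N) × ℝ) : ℝ :=
  heatKernel N (p.2 - q.2) (p.1 - q.1) * ‖q.1‖ ^ (-γ)

variable {N : ℕ} {γ : ℝ} {p q : EuclideanSpace ℝ (Fin N) × ℝ}

@[fun_prop]
theorem measurable_duhamelKernel : Measurable (duhamelKernel γ p) := by
  unfold duhamelKernel
  fun_prop

theorem duhamelKernel_nonneg (hq : q ∈ slab N p.2) : 0 ≤ duhamelKernel γ p q :=
  mul_nonneg (heatKernel_nonneg (sub_nonneg.2 (mem_slab.1 hq).2.le) _) (by positivity)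

theorem exists_setLIntegral_duhamelKernel_mul_exp_le (hγ0 : 0 ≤ γ) (hγ : γ < min 2 (N : ℝ)) :
    ∃ C : ℝ, ∀ b, 0 < b → ∀ p : EuclideanSpace ℝ (Fin N) × ℝ,
      ∫⁻ q in slab N p.2, .ofReal (duhamelKernel γ p q) * .ofReal (exp (b * q.2)) ≤
        .ofReal (C * b ^ (-(1 - γ / 2)) * exp (b * p.2)) := by
  obtain ⟨hγ2, hγN⟩ := lt_min_iff.1 hγ
  obtain ⟨C, hC, hspace⟩ := exists_lintegral_heatKernel_mul_norm_rpow_neg_le hγ0 hγN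
  refine ⟨C * Gamma (1 - γ / 2), fun b hb p => ?_⟩
  calc ∫⁻ q in slab N p.2, .ofReal (duhamelKernel γ p q) * .ofReal (exp (b * q.2))
      = ∫⁻ σ in Ioo 0 p.2, (∫⁻ y, .ofReal (duhamelKernel γ p (y, σ))) * .ofReal (exp (b * σ)) := by
        rw [volume_restrict_slab, lintegral_prod_symm _ (by fun_prop)]
        simp only [lintegral_mul_const' _ _ ENNReal.ofReal_ne_top]
    _ ≤ ∫⁻ σ in Ioo 0 p.2,
          .ofReal C * .ofReal ((p.2 - σ) ^ (1 - γ / 2 - 1) * exp (b * σ)) := by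
        refine setLIntegral_mono' measurableSet_Ioo fun σ hσ => ?_
        rw [← ENNReal.ofReal_mul hC, ← mul_assoc, ENNReal.ofReal_mul' (exp_nonneg _),
          show 1 - γ / 2 - 1 = -γ / 2 by ring]
        gcongr
        exact hspace _ (sub_pos.2 hσ.2) p.1
    _ ≤ .ofReal C * .ofReal (Gamma (1 - γ / 2) * b ^ (-(1 - γ / 2)) * exp (b * p.2)) := by
        rw [lintegral_const_mul' _ _ ENNReal.ofReal_ne_top]
        gcongr
        exact lintegral_Ioo_rpow_mul_exp_le (by linarith) hb p.2
    _ = .ofReal (C * Gamma (1 - γ / 2) * b ^ (-(1 - γ / 2)) * exp (b * p.2)) := by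
        rw [← ENNReal.ofReal_mul hC]
        ring_nf

theorem exists_pos_setLIntegral_duhamelKernel_mul_exp_le (hγ0 : 0 ≤ γ) (hγ : γ < min 2 (N : ℝ))
    {ε : ℝ} (hε : 0 < ε) :
    ∃ b, 0 < b ∧ ∀ p : EuclideanSpace ℝ (Fin N) × ℝ,
      ∫⁻ q in slab N p.2, .ofReal (duhamelKernel γ p q) * .ofReal (exp (b * q.2)) ≤
        .ofReal ε * .ofReal (exp (b * p.2)) := by
  obtain ⟨C, hC⟩ := exists_setLIntegral_duhamelKernel_mul_exp_le hγ0 hγ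
  have hlim : Tendsto (fun b : ℝ => C * b ^ (-(1 - γ / 2))) atTop (𝓝 0) := by
    have hexponent : 0 < 1 - γ / 2 := by linarith [(lt_min_iff.1 hγ).1]
    simpa using (tendsto_rpow_neg_atTop hexponent).const_mul C
  obtain ⟨b, hCb, hb⟩ := ((hlim.eventually_le_const hε).and (eventually_gt_atTop 0)).exists
  refine ⟨b, hb, fun p => (hC b hb p).trans ?_⟩
  rw [← ENNReal.ofReal_mul hε.le]
  gcongr

theorem integrableOn_duhamelKernel (hγ0 : 0 ≤ γ) (hγ : γ < min 2 (N : ℝ))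
    (p : EuclideanSpace ℝ (Fin N) × ℝ) : IntegrableOn (duhamelKernel γ p) (slab N p.2) := by
  obtain ⟨C, hC⟩ := exists_setLIntegral_duhamelKernel_mul_exp_le hγ0 hγ
  rw [IntegrableOn, ← lintegral_ofReal_ne_top_iff_integrable (by fun_prop)
    ((ae_restrict_mem measurableSet_slab).mono fun q => duhamelKernel_nonneg)]
  refine ne_top_of_le_ne_top ENNReal.ofReal_ne_top (le_trans ?_ (hC 1 one_pos p))
  refine setLIntegral_mono' measurableSet_slab fun q hq => le_mul_of_one_le_right' ?_
  rw [ENNReal.one_le_ofReal, one_mul]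
  exact one_le_exp (mem_slab.1 hq).1.le

end DuhamelKernel

section Gronwall

theorem ae_eq_zero_of_le_lintegral {α : Type*} [MeasurableSpace α] {μ : Measure α}
    {ν : α → Measure α} (hν : ∀ᵐ p ∂μ, ν p ≪ μ) {K : α → α → ℝ≥0∞} {d w : α → ℝ≥0∞}
    {θ M : ℝ≥0∞} (hθ : θ < 1) (hM : M ≠ ∞) (hw : ∀ p, w p ≠ ∞)
    (hKw : ∀ᵐ p ∂μ, ∫⁻ q, K p q * w q ∂ν p ≤ θ * w p)
    (hdw : ∀ᵐ p ∂μ, d p ≤ M * w p) (hd : ∀ᵐ p ∂μ, d p ≤ ∫⁻ q, K p q * d q ∂ν p) :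
    d =ᵐ[μ] 0 := by
  have hiter (n : ℕ) : ∀ᵐ p ∂μ, d p ≤ θ ^ n * M * w p := by
    induction n with
    | zero => simpa using hdw
    | succ n ih =>
      have hfin : θ ^ n * M ≠ ∞ := ENNReal.mul_ne_top (ENNReal.pow_ne_top hθ.ne_top) hM
      filter_upwards [hν, hKw, hd] with p hνp hKwp hdp
      calc d p ≤ ∫⁻ q, K p q * d q ∂ν p := hdp
        _ ≤ ∫⁻ q, θ ^ n * M * (K p q * w q) ∂ν p := by
            refine lintegral_mono_ae ?_
            filter_upwards [hνp.ae_le ih] with q hq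
            rw [mul_left_comm]
            gcongr
        _ ≤ θ ^ n * M * (θ * w p) := by
            rw [lintegral_const_mul' _ _ hfin]
            gcongr
        _ = θ ^ (n + 1) * M * w p := by ring
  filter_upwards [ae_all_iff.2 hiter] with p hp
  have hlim : Tendsto (fun n : ℕ => θ ^ n * M * w p) atTop (𝓝 0) := by
    simpa only [mul_assoc, zero_mul] using ENNReal.Tendsto.mul_const
      (ENNReal.tendsto_pow_atTop_nhds_zero_of_lt_one hθ)
      (.inr (ENNReal.mul_ne_top hM (hw p)))
  exact nonpos_iff_eq_zero.1 (ge_of_tendsto' hlim hp)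

theorem ofReal_integral_le_lintegral_ofReal {α : Type*} [MeasurableSpace α] {μ : Measure α}
    (f : α → ℝ) : ENNReal.ofReal (∫ a, f a ∂μ) ≤ ∫⁻ a, .ofReal (f a) ∂μ := by
  by_cases hf : Integrable f μ
  · rw [integral_eq_lintegral_pos_part_sub_lintegral_neg_part hf]
    exact (ENNReal.ofReal_le_ofReal (sub_le_self _ ENNReal.toReal_nonneg)).trans
      ENNReal.ofReal_toReal_le
  · simp [integral_undef hf]

theorem ae_nonpos_of_le_setIntegral_duhamelKernel {N : ℕ} {γ T M : ℝ} {L : ℝ≥0}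
    {d h : EuclideanSpace ℝ (Fin N) × ℝ → ℝ} (hγ0 : 0 ≤ γ) (hγ : γ < min 2 (N : ℝ))
    (hdM : ∀ᵐ p ∂volume.restrict (slab N T), d p ≤ M)
    (hh : ∀ᵐ p ∂volume.restrict (slab N T), ENNReal.ofReal (h p) ≤ L * .ofReal (d p))
    (hd : ∀ᵐ p ∂volume.restrict (slab N T),
      d p ≤ ∫ q in slab N p.2, duhamelKernel γ p q * h q) :
    ∀ᵐ p ∂volume.restrict (slab N T), d p ≤ 0 := by
  have hmem := ae_restrict_mem (μ := volume) (measurableSet_slab (N := N) (T := T))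
  obtain ⟨ε, hε, hLε⟩ := exists_pos_mul_lt one_pos (L : ℝ)
  obtain ⟨b, hb, hsmall⟩ := exists_pos_setLIntegral_duhamelKernel_mul_exp_le hγ0 hγ hε
  have hθ : (L : ℝ≥0∞) * .ofReal ε < 1 := by
    rwa [← ENNReal.ofReal_coe_nnreal, ← ENNReal.ofReal_mul L.coe_nonneg, ENNReal.ofReal_lt_one]
  have hac {p : EuclideanSpace ℝ (Fin N) × ℝ} (hp : p ∈ slab N T) :
      (volume : Measure (EuclideanSpace ℝ (Fin N) × ℝ)).restrict (slab N p.2) ≪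
        volume.restrict (slab N T) :=
    Measure.absolutelyContinuous_of_le
      (Measure.restrict_mono_set _ (slab_subset_slab (mem_slab.1 hp).2.le))
  have hzero : (fun p => ENNReal.ofReal (d p)) =ᵐ[volume.restrict (slab N T)] 0 := by
    refine ae_eq_zero_of_le_lintegral (ν := fun p => volume.restrict (slab N p.2))
      (K := fun p q => L * .ofReal (duhamelKernel γ p q)) (w := fun p => .ofReal (exp (b * p.2)))
      (M := .ofReal M) (hmem.mono fun p => hac) hθ ENNReal.ofReal_ne_top
      (fun p => ENNReal.ofReal_ne_top) (ae_of_all _ fun p => ?_) ?_ ?_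
    · simp only [mul_assoc, lintegral_const_mul' _ _ ENNReal.coe_ne_top]
      gcongr
      exact hsmall p
    · filter_upwards [hmem, hdM] with p hp hdp
      refine (ENNReal.ofReal_le_ofReal hdp).trans (le_mul_of_one_le_right' ?_)
      rw [ENNReal.one_le_ofReal]
      exact one_le_exp (mul_nonneg hb.le (mem_slab.1 hp).1.le)
    · filter_upwards [hmem, hd] with p hp hdp
      refine (ENNReal.ofReal_le_ofReal hdp).trans
        ((ofReal_integral_le_lintegral_ofReal _).trans (lintegral_mono_ae ?_))
      filter_upwards [ae_restrict_mem measurableSet_slab, (hac hp).ae_le hh] with q hq hhq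
      rw [ENNReal.ofReal_mul (duhamelKernel_nonneg hq), mul_right_comm, mul_comm]
      gcongr
  exact hzero.mono fun p hp => ENNReal.ofReal_eq_zero.1 hp

end Gronwall

theorem ofReal_sub_le_of_monotoneOn_of_lipschitzOnWith {g : ℝ → ℝ} {s : Set ℝ} {L : ℝ≥0}
    (hmono : MonotoneOn g s) (hlip : LipschitzOnWith L g s) {a b : ℝ} (ha : a ∈ s) (hb : b ∈ s) :
    ENNReal.ofReal (g a - g b) ≤ L * .ofReal (a - b) := by
  rcases le_total a b with hab | hba
  · rw [ENNReal.ofReal_of_nonpos (sub_nonpos.2 (hmono ha hb hab))]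
    exact zero_le
  · have hdist := hlip.dist_le_mul a ha b hb
    rw [Real.dist_eq, Real.dist_eq, abs_of_nonneg (sub_nonneg.2 hba)] at hdist
    rw [← ENNReal.ofReal_coe_nnreal, ← ENNReal.ofReal_mul L.coe_nonneg]
    exact ENNReal.ofReal_le_ofReal ((le_abs_self _).trans hdist)

theorem memLp_top_comp_of_ae_mem_isCompact {α : Type*} [MeasurableSpace α] {μ : Measure α}
    {g : ℝ → ℝ} {s : Set ℝ} (hs : IsCompact s) (hg : ContinuousOn g s) {w : α → ℝ}
    (hw : AEMeasurable w μ) (hws : ∀ᵐ a ∂μ, w a ∈ s) : MemLp (fun a => g (w a)) ∞ μ := by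
  have hmap : (μ.map w).restrict s = μ.map w :=
    Measure.restrict_eq_self_of_ae_mem ((ae_map_iff hw hs.measurableSet).2 hws)
  have hgm : AEMeasurable g (μ.map w) := hmap ▸ hg.aemeasurable hs.measurableSet
  obtain ⟨C, hC⟩ := hs.exists_bound_of_continuousOn hg
  exact memLp_top_of_bound (hgm.comp_aemeasurable hw).aestronglyMeasurable C
    (hws.mono fun a ha => hC _ ha)

section MildSolution

variable {N : ℕ} {γ T : ℝ} {g : ℝ → ℝ} {u₀ v₀ : EuclideanSpace ℝ (Fin N) → ℝ}
  {u v : EuclideanSpace ℝ (Fin N) → ℝ → ℝ}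

theorem IsLipSolution.exists_ae_mem_Icc (hu : IsLipSolution N γ g u₀ u) (hT : 0 < T) :
    ∃ R, ∀ᵐ p ∂volume.restrict (slab N T), u p.1 p.2 ∈ Icc 0 R := by
  obtain ⟨hnonneg, -, hbdd, -⟩ := hu
  obtain ⟨R, hR⟩ := hbdd T hT
  refine ⟨R, (ae_restrict_iff' measurableSet_slab).2 ?_⟩
  filter_upwards [hR] with p hpR hp
  exact ⟨hnonneg _ _ (mem_slab.1 hp).1.le, (le_abs_self _).trans (hpR (mem_slab.1 hp))⟩

theorem IsLipSolution.integrableOn_duhamelKernel_mul (hγ0 : 0 ≤ γ) (hγ : γ < min 2 (N : ℝ))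
    (hg : ContinuousOn g (Ici 0)) (hu : IsLipSolution N γ g u₀ u)
    {p : EuclideanSpace ℝ (Fin N) × ℝ} (hp : 0 < p.2) :
    IntegrableOn (fun q => duhamelKernel γ p q * g (u q.1 q.2)) (slab N p.2) := by
  obtain ⟨R, hR⟩ := hu.exists_ae_mem_Icc hp
  exact (integrableOn_duhamelKernel hγ0 hγ p).mul_of_top_left
    (memLp_top_comp_of_ae_mem_isCompact isCompact_Icc (hg.mono Icc_subset_Ici_self)
      hu.2.1.restrict hR)

theorem IsLipSolution.ae_eq_add_setIntegral (hγ0 : 0 ≤ γ) (hγ : γ < min 2 (N : ℝ))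
    (hg : ContinuousOn g (Ici 0)) (hu : IsLipSolution N γ g u₀ u) (hT : 0 < T) :
    ∀ᵐ p ∂volume.restrict (slab N T),
      u p.1 p.2 = (∫ y, heatKernel N p.2 (p.1 - y) * u₀ y) +
        ∫ q in slab N p.2, duhamelKernel γ p q * g (u q.1 q.2) := by
  refine (ae_restrict_iff' measurableSet_slab).2 ?_
  filter_upwards [hu.2.2.2 T hT] with p hmild hp
  obtain ⟨hp0, hpT⟩ := mem_slab.1 hp
  have hint := hu.integrableOn_duhamelKernel_mul hγ0 hγ hg hp0
  rw [IntegrableOn, volume_restrict_slab] at hint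
  rw [hmild ⟨hp0, hpT.le⟩, intervalIntegral.integral_of_le hp0.le, integral_Ioc_eq_integral_Ioo,
    volume_restrict_slab, integral_prod_symm _ hint]
  rfl

theorem IsLipSolution.ae_sub_le_setIntegral (hγ0 : 0 ≤ γ) (hγ : γ < min 2 (N : ℝ))
    (hg : ContinuousOn g (Ici 0)) (hu₀ : MemLp u₀ ∞) (hv₀ : MemLp v₀ ∞)
    (hle : v₀ ≤ᵐ[volume] u₀) (hu : IsLipSolution N γ g u₀ u) (hv : IsLipSolution N γ g v₀ v)
    (hT : 0 < T) :
    ∀ᵐ p ∂volume.restrict (slab N T), v p.1 p.2 - u p.1 p.2 ≤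
      ∫ q in slab N p.2, duhamelKernel γ p q * (g (v q.1 q.2) - g (u q.1 q.2)) := by
  filter_upwards [ae_restrict_mem measurableSet_slab, hu.ae_eq_add_setIntegral hγ0 hγ hg hT,
    hv.ae_eq_add_setIntegral hγ0 hγ hg hT] with p hp hup hvp
  have hp0 := (mem_slab.1 hp).1
  have hinitial := integral_heatKernel_mul_mono hp0 p.1 hv₀ hu₀ hle
  simp only [mul_sub]
  rw [integral_sub (hv.integrableOn_duhamelKernel_mul hγ0 hγ hg hp0)
    (hu.integrableOn_duhamelKernel_mul hγ0 hγ hg hp0), hup, hvp]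
  linarith

end MildSolution

theorem lipschitz_comparison_general {N : ℕ} {γ : ℝ} (hγ0 : 0 ≤ γ) (hγ : γ < min 2 (N : ℝ))
    {g : ℝ → ℝ} (hgmono : MonotoneOn g (Ici 0)) (hglip : LocallyLipschitzOn (Ici 0) g)
    {u₀ v₀ : EuclideanSpace ℝ (Fin N) → ℝ} (hu₀ : MemLp u₀ ∞) (hv₀ : MemLp v₀ ∞)
    (hle : v₀ ≤ᵐ[volume] u₀) {u v : EuclideanSpace ℝ (Fin N) → ℝ → ℝ}
    (hu : IsLipSolution N γ g u₀ u) (hv : IsLipSolution N γ g v₀ v) :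
    ∀ᵐ p : EuclideanSpace ℝ (Fin N) × ℝ, 0 < p.2 → v p.1 p.2 ≤ u p.1 p.2 := by
  refine ae_of_forall_ae_restrict_slab fun T hT => ?_
  obtain ⟨A, hA⟩ := hu.exists_ae_mem_Icc hT
  obtain ⟨B, hB⟩ := hv.exists_ae_mem_Icc hT
  have huR := hA.mono fun p hp => Icc_subset_Icc_right (le_max_left A B) hp
  have hvR := hB.mono fun p hp => Icc_subset_Icc_right (le_max_right A B) hp
  have hglip_Icc : LocallyLipschitzOn (Icc 0 (max A B)) g := hglip.mono Icc_subset_Ici_self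
  obtain ⟨L, hL⟩ := hglip_Icc.exists_lipschitzOnWith_of_compact isCompact_Icc
  have hdiff_le : ∀ᵐ p ∂volume.restrict (slab N T), v p.1 p.2 - u p.1 p.2 ≤ B := by
    filter_upwards [hA, hB] with p hup hvp
    linarith [hup.1, hvp.2]
  have hnonlin : ∀ᵐ p ∂volume.restrict (slab N T),
      ENNReal.ofReal (g (v p.1 p.2) - g (u p.1 p.2)) ≤ L * .ofReal (v p.1 p.2 - u p.1 p.2) := by
    filter_upwards [huR, hvR] with p hup hvp
    exact ofReal_sub_le_of_monotoneOn_of_lipschitzOnWith (hgmono.mono Icc_subset_Ici_self) hL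
      hvp hup
  have hduhamel := hu.ae_sub_le_setIntegral hγ0 hγ hglip.continuousOn hu₀ hv₀ hle hv hT
  filter_upwards [ae_nonpos_of_le_setIntegral_duhamelKernel hγ0 hγ hdiff_le hnonlin hduhamel]
    with p hp using sub_nonpos.1 hp

/-- Comparison principle for `u_t - Δu = |x|^{-γ} g(u)` with a non-decreasing
Lipschitz nonlinearity `g`, `g(0) = 0`: if `u₀ ≥ v₀` a.e., then the
corresponding mild solutions satisfy `u ≥ v` a.e. on `ℝ^N × (0,∞)`. -/
theorem lipschitz_comparison (N : ℕ) (hN : 1 ≤ N) (γ : ℝ)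
    (hγ0 : 0 < γ) (hγ : γ < min 2 (N : ℝ))
    (g : ℝ → ℝ)
    (hgnn : ∀ r : ℝ, 0 ≤ r → 0 ≤ g r)
    (hgmono : ∀ r s : ℝ, 0 ≤ r → r ≤ s → g r ≤ g s)
    (L : ℝ) (hL : 0 < L)
    (hglip : ∀ r s : ℝ, 0 ≤ r → 0 ≤ s → |g r - g s| ≤ L * |r - s|)
    (hg0 : g 0 = 0)
    (u₀ v₀ : EuclideanSpace ℝ (Fin N) → ℝ)
    (hu₀m : AEMeasurable u₀) (hv₀m : AEMeasurable v₀)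
    (hu₀nn : ∀ᵐ x ∂volume, 0 ≤ u₀ x) (hv₀nn : ∀ᵐ x ∂volume, 0 ≤ v₀ x)
    (hu₀b : ∃ C : ℝ, ∀ᵐ x ∂volume, |u₀ x| ≤ C)
    (hv₀b : ∃ C : ℝ, ∀ᵐ x ∂volume, |v₀ x| ≤ C)
    (hle : ∀ᵐ x ∂volume, v₀ x ≤ u₀ x)
    (u v : EuclideanSpace ℝ (Fin N) → ℝ → ℝ)
    (hu : IsLipSolution N γ g u₀ u) (hv : IsLipSolution N γ g v₀ v) :
    ∀ᵐ p : EuclideanSpace ℝ (Fin N) × ℝ ∂volume,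
      0 < p.2 → v p.1 p.2 ≤ u p.1 p.2 := by
  have hglip' : LipschitzOnWith ⟨L, hL.le⟩ g (Ici 0) := .of_dist_le_mul fun r hr s => hglip r s hr
  exact lipschitz_comparison_general hγ0.le hγ (fun r hr s _ => hgmono r s hr)
    (fun _ _ => ⟨_, _, self_mem_nhdsWithin, hglip'⟩)
    (hu₀b.elim (memLp_top_of_bound hu₀m.aestronglyMeasurable))
    (hv₀b.elim (memLp_top_of_bound hv₀m.aestronglyMeasurable)) hle hu hv
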